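/- Let n be an integer, let H be a graph on n vertices with maximum degree Δ_H and minimum degree δ_H, and let c : E(K_n) → {−1, +1} be a balanced colouring of the edges of K_n. Then there exists a copy H' of H in K_n such that |c(H')| ≤ Δ_H + δ_H; in particular |c(H')| ≤ 2Δ_H. -/

import Mathlib

/-!
Averaged over all permutations of the vertices, the weight of the copy of `H` is zero, because the
symmetric group is transitive on the edges of the complete graph. Fix a vertex `v` of minimum
degree. Composing with a transposition `(v x)` only affects the edges at `v` or `x`, so it changes
the weight by at most `2 (δ + Δ)`. If every weight had absolute value greater than `Δ + δ`, no such
transposition could change its sign; as these transpositions generate the symmetric group, all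
weights would have the same sign, and their average could not be zero.
-/

open Finset Equiv

section DiscreteIntermediateValue

variable {G R : Type*} [Group G] [CommRing R] [LinearOrder R] [IsStrictOrderedRing R]

theorem pos_iff_pos_of_abs_sub_le_two_mul {a b d : R} (hab : |a - b| ≤ 2 * d) (ha : d < |a|)
    (hb : d < |b|) : 0 < a ↔ 0 < b := by
  rw [abs_le] at hab
  rw [lt_abs] at ha hb
  constructor <;> intro h <;> rcases ha with ha | ha <;> rcases hb with hb | hb <;> linarith

theorem mul_right_iff_of_closure_eq_top {S : Set G} (hS : Subgroup.closure S = ⊤) {p : G → Prop}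
    (hp : ∀ g, ∀ s ∈ S, p (g * s) ↔ p g) (g h : G) : p (g * h) ↔ p g := by
  have hh : h ∈ Subgroup.closure S := hS ▸ Subgroup.mem_top h
  induction hh using Subgroup.closure_induction generalizing g with
  | mem s hs => exact hp g s hs
  | one => rw [mul_one]
  | mul a b _ _ iha ihb => exact mul_assoc g a b ▸ (ihb (g * a)).trans (iha g)
  | inv a _ iha => simpa only [inv_mul_cancel_right] using (iha (g * a⁻¹)).symm

theorem exists_abs_le_of_closure_eq_top_of_sum_eq_zero [Fintype G] {S : Set G}
    (hS : Subgroup.closure S = ⊤) {F : G → R} {d : R} (hd : 0 ≤ d)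
    (hF : ∀ g, ∀ s ∈ S, |F (g * s) - F g| ≤ 2 * d) (hsum : ∑ g, F g = 0) :
    ∃ g, |F g| ≤ d := by
  by_contra! hlarge
  have pos_iff (g : G) : 0 < F g ↔ 0 < F 1 := by
    simpa only [one_mul] using mul_right_iff_of_closure_eq_top hS (p := fun g ↦ 0 < F g)
      (fun g s hs ↦ pos_iff_pos_of_abs_sub_le_two_mul (hF g s hs) (hlarge _) (hlarge g)) 1 g
  obtain ⟨g, -, hg⟩ : ∃ g ∈ univ, F g ≤ 0 := exists_le_of_sum_le univ_nonempty (by simp [hsum])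
  obtain ⟨h, -, hh⟩ : ∃ h ∈ univ, 0 ≤ F h := exists_le_of_sum_le univ_nonempty (by simp [hsum])
  have h_pos : 0 < F h := hh.lt_of_ne' (abs_pos.1 (hd.trans_lt (hlarge h)))
  exact hg.not_gt ((pos_iff g).2 ((pos_iff h).1 h_pos))

end DiscreteIntermediateValue

section Perm

variable {V M : Type*}

theorem closure_range_swap_eq_top [Finite V] [DecidableEq V] (v : V) :
    Subgroup.closure (Set.range (swap v)) = ⊤ := by
  rw [eq_top_iff, ← Perm.closure_isSwap, Subgroup.closure_le]
  rintro _ ⟨x, y, -, rfl⟩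
  have swap_mem (x : V) : swap v x ∈ Subgroup.closure (Set.range (swap v)) :=
    Subgroup.subset_closure ⟨x, rfl⟩
  exact SubmonoidClass.swap_mem_trans (b := v) _ (swap_comm v x ▸ swap_mem x) (swap_mem y)

theorem exists_perm_sym2_map_eq {e e' : Sym2 V} (he : ¬e.IsDiag) (he' : ¬e'.IsDiag) :
    ∃ g : Perm V, e.map g = e' := by
  induction e with | _ a b
  induction e' with | _ x y
  have two_transitive : MulAction.IsMultiplyPretransitive (Perm V) V 2 :=
    Perm.isMultiplyPretransitive V 2
  obtain ⟨g, rfl, rfl⟩ := MulAction.is_two_pretransitive_iff.1 two_transitive he he'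
  exact ⟨g, rfl⟩

variable [Fintype V] [DecidableEq V] [AddCommMonoid M]

theorem sum_perm_sym2_map_eq (c : Sym2 V → M) {e e' : Sym2 V} (he : ¬e.IsDiag) (he' : ¬e'.IsDiag) :
    ∑ s : Perm V, c (e.map s) = ∑ s : Perm V, c (e'.map s) := by
  obtain ⟨g, rfl⟩ := exists_perm_sym2_map_eq he he'
  rw [← Equiv.sum_comp (Equiv.mulRight g)]
  simp [Sym2.map_map]

end Perm

section CopyWeight

variable {V W M R : Type*} (H : SimpleGraph V)

/-- The total weight, under the edge weighting `c`, of the copy of `H` obtained by sending each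
vertex `v` to `f v`. It is meant for injective `f`; otherwise edges of `H` with the same image are
counted separately. -/
def copyWeight [Fintype H.edgeSet] [AddCommMonoid M] (c : Sym2 W → M) (f : V → W) : M :=
  ∑ e ∈ H.edgeFinset, c (e.map f)

section Average

variable [Fintype V] [DecidableEq V] [AddCommMonoid M]

theorem copyWeight_top_perm (c : Sym2 V → M) (s : Perm V) :
    copyWeight ⊤ c s = ∑ e ∈ (⊤ : SimpleGraph V).edgeFinset, c e := by
  have bijective : Function.Bijective (Sym2.map s) :=
    Finite.injective_iff_bijective.1 (Sym2.map.injective s.injective)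
  refine sum_bijective _ bijective (fun e ↦ ?_) fun _ _ ↦ rfl
  induction e with | _ a b
  simp

theorem card_nsmul_sum_perm_sym2_map (c : Sym2 V → M) {e : Sym2 V} (he : ¬e.IsDiag) :
    #(⊤ : SimpleGraph V).edgeFinset • ∑ s : Perm V, c (e.map s) =
      Fintype.card (Perm V) • ∑ e' ∈ (⊤ : SimpleGraph V).edgeFinset, c e' :=
  calc
    _ = ∑ e' ∈ (⊤ : SimpleGraph V).edgeFinset, ∑ s : Perm V, c (e'.map s) := by
      refine (sum_eq_card_nsmul fun e' he' ↦ sum_perm_sym2_map_eq c ?_ he).symm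
      exact SimpleGraph.not_isDiag_of_mem_edgeFinset he'
    _ = ∑ s : Perm V, copyWeight ⊤ c s := sum_comm
    _ = _ := by simp only [copyWeight_top_perm, sum_const, card_univ]

theorem sum_perm_copyWeight_eq_zero [Fintype H.edgeSet] [IsAddTorsionFree M] {c : Sym2 V → M}
    (hc : ∑ e ∈ (⊤ : SimpleGraph V).edgeFinset, c e = 0) :
    ∑ s : Perm V, copyWeight H c s = 0 := by
  simp only [copyWeight]
  rw [sum_comm]
  refine sum_eq_zero fun e he ↦ ?_
  have e_not_diag : ¬e.IsDiag := H.not_isDiag_of_mem_edgeFinset he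
  have card_ne_zero : #(⊤ : SimpleGraph V).edgeFinset ≠ 0 :=
    card_ne_zero_of_mem (a := e) (by simpa using e_not_diag)
  have card_nsmul_sum_eq := card_nsmul_sum_perm_sym2_map c e_not_diag
  rw [hc, nsmul_zero] at card_nsmul_sum_eq
  exact (nsmul_eq_zero_iff_right card_ne_zero).1 card_nsmul_sum_eq

end Average

section Bounds

variable [CommRing R] [LinearOrder R] [IsStrictOrderedRing R]

theorem abs_copyWeight_sub_le [Fintype H.edgeSet] [H.LocallyFinite] {c : Sym2 W → R}
    (hc : ∀ e, ¬e.IsDiag → |c e| ≤ 1) {f g : V → W} (hf : f.Injective)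
    (hg : g.Injective) {S : Finset V} (hfg : ∀ v ∉ S, f v = g v) :
    |copyWeight H c f - copyWeight H c g| ≤ 2 * ∑ v ∈ S, (H.degree v : R) := by
  classical
  have weight_le {h : V → W} (hh : h.Injective) {e : Sym2 V} (he : e ∈ H.edgeFinset) :
      |c (e.map h)| ≤ 1 :=
    hc _ (by rw [Sym2.isDiag_map hh]; exact H.not_isDiag_of_mem_edgeFinset he)
  let T : Finset (Sym2 V) := S.biUnion fun v ↦ H.incidenceFinset v
  have T_subset : T ⊆ H.edgeFinset := biUnion_subset.2 fun v _ ↦ H.incidenceFinset_subset v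
  have eq_off_T : ∀ e ∈ H.edgeFinset, e ∉ T → c (e.map f) - c (e.map g) = 0 := by
    intro e he heT
    refine sub_eq_zero.2 (congrArg c (Sym2.map_congr fun v hv ↦ hfg v fun hvS ↦ heT ?_))
    exact mem_biUnion.2
      ⟨v, hvS, (H.mem_incidenceFinset v e).2 ⟨SimpleGraph.mem_edgeFinset.1 he, hv⟩⟩
  have card_T_le : #T ≤ ∑ v ∈ S, H.degree v := by
    simpa only [H.card_incidenceFinset_eq_degree] using
      card_biUnion_le (s := S) (t := fun v ↦ H.incidenceFinset v)
  calc
    |copyWeight H c f - copyWeight H c g| = |∑ e ∈ T, (c (e.map f) - c (e.map g))| := by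
      rw [copyWeight, copyWeight, ← sum_sub_distrib, sum_subset T_subset eq_off_T]
    _ ≤ ∑ e ∈ T, |c (e.map f) - c (e.map g)| := abs_sum_le_sum_abs _ _
    _ ≤ #T • 2 := by
      refine sum_le_card_nsmul _ _ 2 fun e he ↦ (abs_sub _ _).trans ?_
      linarith [weight_le hf (T_subset he), weight_le hg (T_subset he)]
    _ ≤ 2 * ∑ v ∈ S, (H.degree v : R) := by
      rw [nsmul_eq_mul, mul_comm]
      gcongr
      exact_mod_cast card_T_le

variable [Fintype V] [DecidableEq V] [DecidableRel H.Adj]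

theorem abs_copyWeight_mul_swap_sub_le {c : Sym2 V → R} (hc : ∀ e, ¬e.IsDiag → |c e| ≤ 1)
    (s : Perm V) (v w : V) :
    |copyWeight H c (s * swap v w : Perm V) - copyWeight H c s| ≤
      2 * ((H.degree v : R) + H.degree w) := by
  rcases eq_or_ne v w with rfl | hvw
  · rw [swap_self, ← Perm.one_def, mul_one, sub_self, abs_zero]
    positivity
  · rw [← sum_pair (f := fun u ↦ (H.degree u : R)) hvw]
    refine abs_copyWeight_sub_le H hc (Equiv.injective _) s.injective fun u hu ↦ ?_
    rw [mem_insert, mem_singleton, not_or] at hu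
    rw [Perm.mul_apply, swap_apply_of_ne_of_ne hu.1 hu.2]

theorem exists_perm_abs_copyWeight_le_maxDegree_add_degree {c : Sym2 V → R}
    (hc : ∀ e, ¬e.IsDiag → |c e| ≤ 1)
    (hbal : ∑ e ∈ (⊤ : SimpleGraph V).edgeFinset, c e = 0) (v : V) :
    ∃ s : Perm V, |copyWeight H c s| ≤ H.maxDegree + H.degree v := by
  refine exists_abs_le_of_closure_eq_top_of_sum_eq_zero (closure_range_swap_eq_top v)
    (by positivity) ?_ (sum_perm_copyWeight_eq_zero H hbal)
  rintro s _ ⟨w, rfl⟩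
  have degree_le : (H.degree w : R) ≤ H.maxDegree := by exact_mod_cast H.degree_le_maxDegree w
  linarith [abs_copyWeight_mul_swap_sub_le H hc s v w]

theorem almost_balanced_spanning_graph_general {c : Sym2 V → R}
    (hc : ∀ e ∈ (⊤ : SimpleGraph V).edgeFinset, |c e| ≤ 1)
    (hbal : ∑ e ∈ (⊤ : SimpleGraph V).edgeFinset, c e = 0) :
    ∃ s : Perm V, |∑ e ∈ H.edgeFinset, c (e.map s)| ≤ H.maxDegree + H.minDegree := by
  rcases isEmpty_or_nonempty V with _ | _
  · exact ⟨1, by simp [eq_empty_of_isEmpty H.edgeFinset]⟩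
  · obtain ⟨v, hv⟩ := H.exists_minimal_degree_vertex
    rw [hv]
    exact exists_perm_abs_copyWeight_le_maxDegree_add_degree H
      (fun e he ↦ hc e (by simpa using he)) hbal v

end Bounds

end CopyWeight

/-- If `c` is a balanced `±1`-colouring of the edges of `K_n` and `H`
is any graph on `n` vertices with maximum degree `Δ_H` and minimum degree `δ_H`, then
there is a copy `H'` of `H` in `K_n` with `|c(H')| ≤ Δ_H + δ_H`; in particular
`|c(H')| ≤ 2Δ_H`. -/
theorem almost_balanced_spanning_graph
    (n : ℕ) (H : SimpleGraph (Fin n)) [DecidableRel H.Adj]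
    (ΔH δH : ℕ) (hΔ : H.maxDegree = ΔH) (hδ : H.minDegree = δH)
    (c : Sym2 (Fin n) → ℤ)
    (hc : ∀ e ∈ (⊤ : SimpleGraph (Fin n)).edgeFinset, c e = 1 ∨ c e = -1)
    (hbal : ∑ e ∈ (⊤ : SimpleGraph (Fin n)).edgeFinset, c e = 0) :
    ∃ f : Fin n ↪ Fin n,
      |∑ e ∈ H.edgeFinset, c (Sym2.map (⇑f) e)| ≤ (ΔH : ℤ) + δH ∧
      |∑ e ∈ H.edgeFinset, c (Sym2.map (⇑f) e)| ≤ 2 * ΔH := by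
  subst hΔ hδ
  obtain ⟨s, hs⟩ := almost_balanced_spanning_graph_general H
    (fun e he ↦ by rcases hc e he with h | h <;> simp [h]) hbal
  have := H.minDegree_le_maxDegree
  exact ⟨s.toEmbedding, hs, hs.trans (by lia)⟩
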